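/- arXiv:1305.4449 — 2 statements merged into one kernel-verified Lean document; each statement's English description precedes it below -/
import Mathlib

section
/- Let γ > 0 and 0 < μ < 1 be real and n ≥ 1 an integer. Then the relative Fisher information of the monic Meixner polynomial satisfies [Σ_{x=0}^∞ ω(x)(M_n^{γ,μ}(x+1) − M_n^{γ,μ}(x))²] / [Σ_{x=0}^∞ ω(x) M_n^{γ,μ}(x)²] = n(1−μ)²/(μ(n+γ−1)) · Σ_{k=0}^{n-1} ((1−n)_k/(2−n−γ)_k) μ^k, where the finite sum is the terminating hypergeometric series ₂F₁(1−n, 1; 2−n−γ; μ) and all denominators (2−n−γ)_k are nonzero since γ > 0. -/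
/-- Pochhammer symbol `(a)_k = a(a+1)⋯(a+k-1)`. -/
noncomputable def poch (a : ℝ) (k : ℕ) : ℝ := ∏ i ∈ Finset.range k, (a + i)

open Polynomial Filter Topology

/-!
The Pearson relation `L (X p) = μ L ((X + γ) p(X + 1))` of the Meixner functional `L` passes, with
`γ + 1` in place of `γ`, to the functional `p ↦ L ((X + γ) p)`, and summation by parts makes a
raising operator adjoint to the forward difference `Δ` between the two. The Rodrigues formula
therefore gives the orthogonal polynomials, together with `Δ M_{n+1}^γ = (n + 1) M_n^{γ+1}`, so the
Fisher information is `(n + 1)² ‖M_n^{γ+1}‖² / ‖M_{n+1}^γ‖²` with both norms taken for the parameter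
`γ`. In the contiguous relation `M_{n+1}^{γ+1} = M_{n+1}^γ - (n + 1) μ/(1 - μ) M_n^{γ+1}` the two
terms on the right are orthogonal, and Pythagoras turns it into a recursion in `n` for
`‖M_n^{γ+1}‖² / ‖M_n^γ‖²`, which is the recursion of the terminating hypergeometric series.
-/

lemma map_eq_zero_of_degree_lt {R V : Type*} [Semiring R] [AddCommMonoid V] [Module R V] {n : ℕ}
    (f : R[X] →ₗ[R] V) (hf : ∀ k < n, f (X ^ k) = 0) {p : R[X]} (hp : p.degree < n) :
    f p = 0 := by
  classical
  have hle : degreeLT R n ≤ LinearMap.ker f := by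
    rw [degreeLT_eq_span_X_pow, Submodule.span_le]
    simpa [Set.subset_def] using hf
  exact hle (mem_degreeLT.2 hp)

section MonicOrthogonal

variable {R : Type*} [CommRing R] {L : R[X] →ₗ[R] R} {n : ℕ} {P Q : R[X]}

/-- `P` is a monic orthogonal polynomial of degree `n` for the linear functional `L`, which plays
the role of integration against the weight. -/
structure IsMonicOrthogonal (L : R[X] →ₗ[R] R) (n : ℕ) (P : R[X]) : Prop where
  monic : P.Monic
  natDegree_eq : P.natDegree = n
  map_mul_X_pow : ∀ k < n, L (P * X ^ k) = 0

namespace IsMonicOrthogonal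

lemma map_mul_eq_zero (hP : IsMonicOrthogonal L n P) {p : R[X]} (hp : p.degree < n) :
    L (P * p) = 0 :=
  map_eq_zero_of_degree_lt (L ∘ₗ LinearMap.mulLeft R P) hP.map_mul_X_pow hp

lemma degree_eq [Nontrivial R] (hP : IsMonicOrthogonal L n P) : P.degree = n := by
  rw [degree_eq_natDegree hP.monic.ne_zero, hP.natDegree_eq]

lemma eq (hL : ∀ p, L (p ^ 2) = 0 → p = 0) (hP : IsMonicOrthogonal L n P)
    (hQ : IsMonicOrthogonal L n Q) : P = Q := by
  nontriviality R
  have hlt : (P - Q).degree < n := hP.degree_eq ▸ degree_sub_lt_left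
    (hP.degree_eq.trans hQ.degree_eq.symm) hP.monic.ne_zero
    (hP.monic.leadingCoeff.trans hQ.monic.leadingCoeff.symm)
  refine sub_eq_zero.1 (hL _ ?_)
  rw [sq, sub_mul, map_sub, hP.map_mul_eq_zero hlt, hQ.map_mul_eq_zero hlt, sub_zero]

end IsMonicOrthogonal

end MonicOrthogonal

section ForwardDiff

variable {R : Type*} [Ring R]

/-- The forward difference `p(X + 1) - p(X)` as an operator on polynomials. -/
noncomputable def forwardDiff : R[X] →ₗ[R] R[X] := taylor 1 - LinearMap.id

lemma forwardDiff_apply (p : R[X]) : forwardDiff p = taylor 1 p - p := rfl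

lemma degree_forwardDiff_lt {p : R[X]} (hp : p ≠ 0) : (forwardDiff p).degree < p.degree :=
  degree_taylor p 1 ▸ degree_sub_lt_left (degree_taylor p 1) ((taylor_eq_zero 1 p).not.2 hp)
    (leadingCoeff_taylor 1 p)

end ForwardDiff

section Meixner

variable {K : Type*} [Field K] {γ μ : K} {L : K[X] →ₗ[K] K}

/-- The raising operator `q ↦ (X q(X - 1) - μ (X + γ) q) / (1 - μ)` of the Meixner polynomials: up
to a constant, the adjoint of the forward difference. It is written so that the second summand has
lower degree than the first. -/
noncomputable def meixnerRaise (γ μ : K) : K[X] →ₗ[K] K[X] :=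
  LinearMap.mulLeft K X ∘ₗ taylor (-1) +
    (μ / (1 - μ)) • (LinearMap.mulLeft K X ∘ₗ taylor (-1) - LinearMap.mulLeft K (X + C γ))

/-- The monic Meixner polynomials, defined by the Rodrigues formula. -/
noncomputable def meixnerPoly : K → K → ℕ → K[X]
  | _, _, 0 => 1
  | γ, μ, n + 1 => meixnerRaise γ μ (meixnerPoly (γ + 1) μ n)

lemma meixnerPoly_zero (γ μ : K) : meixnerPoly γ μ 0 = 1 := rfl

lemma meixnerPoly_succ (γ μ : K) (n : ℕ) :
    meixnerPoly γ μ (n + 1) = meixnerRaise γ μ (meixnerPoly (γ + 1) μ n) := rfl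

/-- The Pearson relation satisfied by summation against the Meixner weight `ω`; it encodes
`(x + 1) ω(x + 1) = μ (γ + x) ω(x)`. -/
def IsMeixnerFunctional (γ μ : K) (L : K[X] →ₗ[K] K) : Prop :=
  ∀ p, L (X * p) = μ * L ((X + C γ) * taylor 1 p)

/-- The functional `p ↦ L ((X + γ) p)`. If `L` is summation against the Meixner weight of parameter
`γ`, this is, up to a constant factor, summation against the weight of parameter `γ + 1`. -/
noncomputable def meixnerShift (γ : K) (L : K[X] →ₗ[K] K) : K[X] →ₗ[K] K :=
  L ∘ₗ LinearMap.mulLeft K (X + C γ)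

lemma meixnerRaise_apply (γ μ : K) (q : K[X]) :
    meixnerRaise γ μ q = X * taylor (-1) q +
      C (μ / (1 - μ)) * (X * taylor (-1) q - (X + C γ) * q) := by
  simp [meixnerRaise, smul_eq_C_mul]

lemma meixnerShift_apply (γ : K) (L : K[X] →ₗ[K] K) (p : K[X]) :
    meixnerShift γ L p = L ((X + C γ) * p) := rfl

lemma degree_meixnerRaise_sub_lt (γ μ : K) {q : K[X]} (hq : q.Monic) :
    (meixnerRaise γ μ q - X * taylor (-1) q).degree < (X * taylor (-1) q).degree := by
  have hT : (X * taylor (-1) q).Monic := monic_X.mul ((leadingCoeff_taylor (-1) q).trans hq)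
  rw [meixnerRaise_apply, add_sub_cancel_left, ← smul_eq_C_mul]
  refine (degree_smul_le _ _).trans_lt (degree_sub_lt_left ?_ hT.ne_zero ?_)
  · rw [degree_mul, degree_mul, degree_taylor, degree_X, degree_X_add_C]
  · rw [hT.leadingCoeff, ((monic_X_add_C γ).mul hq).leadingCoeff]

lemma monic_meixnerRaise (γ μ : K) {q : K[X]} (hq : q.Monic) : (meixnerRaise γ μ q).Monic := by
  rw [← add_sub_cancel (X * taylor (-1) q) (meixnerRaise γ μ q)]
  exact (monic_X.mul ((leadingCoeff_taylor (-1) q).trans hq)).add_of_left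
    (degree_meixnerRaise_sub_lt γ μ hq)

lemma natDegree_meixnerRaise (γ μ : K) {q : K[X]} (hq : q.Monic) :
    (meixnerRaise γ μ q).natDegree = q.natDegree + 1 := by
  rw [← add_sub_cancel (X * taylor (-1) q) (meixnerRaise γ μ q),
    natDegree_add_eq_left_of_degree_lt (degree_meixnerRaise_sub_lt γ μ hq),
    natDegree_X_mul ((taylor_eq_zero (-1) q).not.2 hq.ne_zero), natDegree_taylor]

lemma meixnerRaise_eq_add_one (γ μ : K) (q : K[X]) :
    meixnerRaise γ μ q = meixnerRaise (γ + 1) μ q + C (μ / (1 - μ)) * q := by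
  simp only [meixnerRaise_apply, C_add, C_1]
  ring

lemma forwardDiff_meixnerRaise (γ μ : K) (q : K[X]) :
    forwardDiff (meixnerRaise γ μ q) = meixnerRaise (γ + 1) μ (forwardDiff q) + q := by
  simp only [forwardDiff_apply, meixnerRaise_apply, taylor_mul, taylor_taylor, taylor_C, taylor_X,
    map_sub, map_add, add_neg_cancel, neg_add_cancel, taylor_zero, C_1]
  ring

lemma forwardDiff_meixnerPoly_succ (γ μ : K) (n : ℕ) :
    forwardDiff (meixnerPoly γ μ (n + 1)) = (n + 1 : K) • meixnerPoly (γ + 1) μ n := by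
  induction n generalizing γ with
  | zero =>
    rw [meixnerPoly_succ, meixnerPoly_zero, forwardDiff_meixnerRaise]
    simp [forwardDiff_apply]
  | succ n ih =>
    rw [meixnerPoly_succ, forwardDiff_meixnerRaise, ih, map_smul, ← meixnerPoly_succ]
    push_cast
    module

lemma meixnerPoly_succ_eq_add_one (γ μ : K) (n : ℕ) :
    meixnerPoly γ μ (n + 1) = meixnerPoly (γ + 1) μ (n + 1) +
      ((n + 1) * (μ / (1 - μ))) • meixnerPoly (γ + 1) μ n := by
  induction n generalizing γ with
  | zero => simp [meixnerPoly_succ, meixnerPoly_zero, meixnerRaise_eq_add_one γ, smul_eq_C_mul]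
  | succ n ih =>
    have hraise : meixnerRaise (γ + 1) μ (meixnerPoly (γ + 1) μ (n + 1)) =
        meixnerPoly (γ + 1) μ (n + 2) +
          ((n + 1) * (μ / (1 - μ))) • meixnerPoly (γ + 1) μ (n + 1) := by
      rw [meixnerPoly_succ (γ + 1) μ (n + 1), meixnerPoly_succ (γ + 1) μ n, ← map_smul, ← map_add,
        ← ih (γ + 1), meixnerPoly_succ]
    rw [meixnerPoly_succ, meixnerRaise_eq_add_one, hraise, ← smul_eq_C_mul]
    push_cast
    module

namespace IsMeixnerFunctional

lemma shift (hL : IsMeixnerFunctional γ μ L) :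
    IsMeixnerFunctional (γ + 1) μ (meixnerShift γ L) := fun p => by
  rw [meixnerShift_apply, meixnerShift_apply, mul_left_comm, hL, taylor_mul, map_add, taylor_X,
    taylor_C, add_assoc, ← C_add, add_comm 1 γ]

lemma map_meixnerRaise_mul (hL : IsMeixnerFunctional γ μ L) (hμ : μ ≠ 1) (q p : K[X]) :
    L (meixnerRaise γ μ q * p) = μ / (1 - μ) * meixnerShift γ L (q * forwardDiff p) := by
  have hμ' : 1 - μ ≠ 0 := sub_ne_zero.2 hμ.symm
  have hpearson : L (X * (taylor (-1) q * p)) = μ * L ((X + C γ) * (q * taylor 1 p)) := by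
    rw [hL, taylor_mul, taylor_taylor, add_neg_cancel, taylor_zero]
  have hexpand : meixnerRaise γ μ q * p = X * (taylor (-1) q * p) +
      (μ / (1 - μ)) • (X * (taylor (-1) q * p) - (X + C γ) * (q * p)) := by
    rw [meixnerRaise_apply, smul_eq_C_mul]
    ring
  rw [hexpand, meixnerShift_apply, forwardDiff_apply, mul_sub, mul_sub]
  simp only [map_add, map_smul, map_sub, smul_eq_mul, hpearson]
  field_simp
  ring

lemma isMonicOrthogonal_meixnerPoly (hL : IsMeixnerFunctional γ μ L) (hμ : μ ≠ 1) (n : ℕ) :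
    IsMonicOrthogonal L n (meixnerPoly γ μ n) := by
  induction n generalizing γ L with
  | zero => exact ⟨monic_one, natDegree_one, by simp⟩
  | succ n ih =>
    have hP := ih hL.shift
    refine ⟨monic_meixnerRaise γ μ hP.monic, ?_, fun k hk => ?_⟩
    · rw [meixnerPoly_succ, natDegree_meixnerRaise γ μ hP.monic, hP.natDegree_eq]
    · have hdeg : (forwardDiff (X ^ k : K[X])).degree < n :=
        (degree_forwardDiff_lt (pow_ne_zero k X_ne_zero)).trans_le <| by
          rw [degree_X_pow]
          exact_mod_cast Nat.lt_succ_iff.1 hk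
      rw [meixnerPoly_succ, hL.map_meixnerRaise_mul hμ, hP.map_mul_eq_zero hdeg, mul_zero]

lemma meixnerShift_one (hL : IsMeixnerFunctional γ μ L) (hμ : μ ≠ 1) :
    meixnerShift γ L 1 = γ / (1 - μ) * L 1 := by
  have hμ' : 1 - μ ≠ 0 := sub_ne_zero.2 hμ.symm
  have hC : L (C γ) = γ * L 1 := by
    rw [← mul_one (C γ), ← smul_eq_C_mul, map_smul, smul_eq_mul]
  have hX : L X = μ * (L X + γ * L 1) := by simpa [hC] using hL 1
  rw [meixnerShift_apply, mul_one, map_add, hC]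
  field_simp
  linear_combination hX

lemma map_meixnerPoly_succ_sq_shift (hL : IsMeixnerFunctional γ μ L) (hμ : μ ≠ 1) (n : ℕ) :
    L (meixnerPoly γ μ (n + 1) ^ 2) =
      (n + 1) * μ / (1 - μ) * meixnerShift γ L (meixnerPoly (γ + 1) μ n ^ 2) := by
  conv_lhs => rw [sq, meixnerPoly_succ]
  rw [hL.map_meixnerRaise_mul hμ, ← meixnerPoly_succ, forwardDiff_meixnerPoly_succ, mul_smul_comm,
    ← sq, map_smul, smul_eq_mul]
  ring

lemma map_meixnerPoly_succ_sq (hL : IsMeixnerFunctional γ μ L) (hμ : μ ≠ 1) (n : ℕ) :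
    L (meixnerPoly γ μ (n + 1) ^ 2) =
      (n + 1) * (γ + n) * μ / (1 - μ) ^ 2 * L (meixnerPoly γ μ n ^ 2) := by
  induction n generalizing γ L with
  | zero =>
    rw [hL.map_meixnerPoly_succ_sq_shift hμ]
    simp only [meixnerPoly_zero, one_pow, hL.meixnerShift_one hμ, Nat.cast_zero]
    field_simp
    ring
  | succ n ih =>
    rw [hL.map_meixnerPoly_succ_sq_shift hμ, ih hL.shift, hL.map_meixnerPoly_succ_sq_shift hμ]
    push_cast
    ring

lemma map_meixnerPoly_add_one_succ_sq (hL : IsMeixnerFunctional γ μ L) (hμ : μ ≠ 1) (n : ℕ) :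
    L (meixnerPoly (γ + 1) μ (n + 1) ^ 2) = L (meixnerPoly γ μ (n + 1) ^ 2) +
      ((n + 1) * (μ / (1 - μ))) ^ 2 * L (meixnerPoly (γ + 1) μ n ^ 2) := by
  set c : K := (n + 1) * (μ / (1 - μ))
  have horth : L (meixnerPoly γ μ (n + 1) * meixnerPoly (γ + 1) μ n) = 0 := by
    refine (hL.isMonicOrthogonal_meixnerPoly hμ (n + 1)).map_mul_eq_zero ?_
    rw [(hL.shift.isMonicOrthogonal_meixnerPoly hμ n).degree_eq]
    exact_mod_cast n.lt_succ_self
  have hcontiguous : meixnerPoly γ μ (n + 1) =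
      meixnerPoly (γ + 1) μ (n + 1) + c • meixnerPoly (γ + 1) μ n :=
    meixnerPoly_succ_eq_add_one γ μ n
  have hexpand : meixnerPoly (γ + 1) μ (n + 1) ^ 2 = meixnerPoly γ μ (n + 1) ^ 2 -
      (2 * c) • (meixnerPoly γ μ (n + 1) * meixnerPoly (γ + 1) μ n) +
      c ^ 2 • meixnerPoly (γ + 1) μ n ^ 2 := by
    rw [hcontiguous]
    simp only [smul_eq_C_mul, C_mul, C_pow, map_ofNat]
    ring
  rw [hexpand, map_add, map_sub, map_smul, map_smul, horth, smul_zero, sub_zero, smul_eq_mul]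

end IsMeixnerFunctional

end Meixner

section Hypergeometric

/-- The sum of the first `n` terms of the hypergeometric series `₂F₁(a, 1; c; z)`. -/
noncomputable def hypergeometricPartialSum (a c z : ℝ) (n : ℕ) : ℝ :=
  ∑ k ∈ Finset.range n, poch a k / poch c k * z ^ k

lemma poch_succ_left (a : ℝ) (k : ℕ) : poch a (k + 1) = a * poch (a + 1) k := by
  simp [poch, Finset.prod_range_succ', mul_comm, add_assoc, add_comm (1 : ℝ)]

lemma hypergeometricPartialSum_one (a c z : ℝ) : hypergeometricPartialSum a c z 1 = 1 := by
  simp [hypergeometricPartialSum, poch]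

lemma hypergeometricPartialSum_succ (a c z : ℝ) (n : ℕ) :
    hypergeometricPartialSum a c z (n + 1) =
      1 + a / c * z * hypergeometricPartialSum (a + 1) (c + 1) z n := by
  rw [hypergeometricPartialSum, Finset.sum_range_succ', add_comm, hypergeometricPartialSum,
    Finset.mul_sum]
  congr 1
  · simp [poch]
  · refine Finset.sum_congr rfl fun k _ => ?_
    rw [poch_succ_left, poch_succ_left, mul_div_mul_comm]
    ring

end Hypergeometric

section FisherInformation

namespace IsMeixnerFunctional

variable {γ μ : ℝ} {L : ℝ[X] →ₗ[ℝ] ℝ}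

lemma map_meixnerPoly_add_one_sq (hL : IsMeixnerFunctional γ μ L) (hμ : μ ≠ 1)
    (hγ : ∀ k : ℕ, γ + k ≠ 0) (n : ℕ) :
    L (meixnerPoly (γ + 1) μ n ^ 2) = L (meixnerPoly γ μ n ^ 2) *
      hypergeometricPartialSum (-n) (1 - n - γ) μ (n + 1) := by
  have hμ' : 1 - μ ≠ 0 := sub_ne_zero.2 hμ.symm
  induction n with
  | zero => simp [meixnerPoly_zero, hypergeometricPartialSum_one]
  | succ n ih =>
    have hseries : hypergeometricPartialSum (-(n + 1 : ℕ)) (1 - (n + 1 : ℕ) - γ) μ (n + 2) =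
        1 + (n + 1) / (γ + n) * μ * hypergeometricPartialSum (-n) (1 - n - γ) μ (n + 1) := by
      rw [hypergeometricPartialSum_succ, ← neg_div_neg_eq]
      push_cast
      ring_nf
    have := hγ n
    rw [hL.map_meixnerPoly_add_one_succ_sq hμ, ih, hseries, hL.map_meixnerPoly_succ_sq hμ]
    field_simp

theorem map_forwardDiff_sq_div_map_sq (hL : IsMeixnerFunctional γ μ L) (hμ : μ ≠ 1)
    (hγ : ∀ k : ℕ, γ + k ≠ 0) {n : ℕ} (hn : L (meixnerPoly γ μ n ^ 2) ≠ 0) :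
    L (forwardDiff (meixnerPoly γ μ (n + 1)) ^ 2) / L (meixnerPoly γ μ (n + 1) ^ 2) =
      (n + 1) * (1 - μ) ^ 2 / (μ * (γ + n)) *
        hypergeometricPartialSum (-n) (1 - n - γ) μ (n + 1) := by
  have hμ' : 1 - μ ≠ 0 := sub_ne_zero.2 hμ.symm
  have := hγ n
  rw [forwardDiff_meixnerPoly_succ, _root_.smul_pow, map_smul, smul_eq_mul,
    hL.map_meixnerPoly_add_one_sq hμ hγ, hL.map_meixnerPoly_succ_sq hμ]
  field_simp

end IsMeixnerFunctional

end FisherInformation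

section Moment

variable {w : ℕ → ℝ}

lemma summable_mul_pow_of_tendsto_ratio {l : ℝ} (hl : |l| < 1) (hw : ∀ᶠ x in atTop, w x ≠ 0)
    (hlim : Tendsto (fun x => w (x + 1) / w x) atTop (𝓝 l)) (k : ℕ) :
    Summable fun x : ℕ => w x * (x : ℝ) ^ k := by
  have hpow : Tendsto (fun x : ℕ => ((1 + 1 * x) / (0 + 1 * x) : ℝ) ^ k) atTop (𝓝 1) := by
    simpa using (tendsto_add_mul_div_add_mul_atTop_nhds (1 : ℝ) 0 1 one_ne_zero).pow k
  have hratio := (hlim.mul hpow).norm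
  rw [mul_one] at hratio
  refine summable_of_ratio_test_tendsto_lt_one hl ?_ (hratio.congr fun x => ?_)
  · filter_upwards [hw, eventually_ne_atTop 0] with x hx hx0
    exact mul_ne_zero hx (pow_ne_zero k (Nat.cast_ne_zero.2 hx0))
  · rw [← norm_div, mul_div_mul_comm, ← div_pow, Nat.cast_succ, zero_add, one_mul, add_comm (1 : ℝ)]

lemma summable_mul_eval (hw : ∀ k : ℕ, Summable fun x : ℕ => w x * (x : ℝ) ^ k) (p : ℝ[X]) :
    Summable fun x : ℕ => w x * p.eval (x : ℝ) := by
  induction p using Polynomial.induction_on' with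
  | add p q hp hq => simpa only [eval_add, mul_add] using hp.add hq
  | monomial k a => simpa only [eval_monomial, mul_left_comm] using (hw k).mul_left a

/-- Summation of polynomials against a weight on the nonnegative integers all of whose moments
converge, as a linear functional. -/
noncomputable def momentFunctional (w : ℕ → ℝ)
    (hw : ∀ k : ℕ, Summable fun x : ℕ => w x * (x : ℝ) ^ k) : ℝ[X] →ₗ[ℝ] ℝ where
  toFun p := ∑' x : ℕ, w x * p.eval (x : ℝ)
  map_add' p q := by
    simp only [eval_add, mul_add]
    exact (summable_mul_eval hw p).tsum_add (summable_mul_eval hw q)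
  map_smul' a p := by
    simp only [eval_smul, smul_eq_mul, mul_left_comm _ a, tsum_mul_left, RingHom.id_apply]

variable {hw : ∀ k : ℕ, Summable fun x : ℕ => w x * (x : ℝ) ^ k}

lemma momentFunctional_apply (p : ℝ[X]) :
    momentFunctional w hw p = ∑' x : ℕ, w x * p.eval (x : ℝ) := rfl

lemma eq_zero_of_momentFunctional_sq_eq_zero (hnonneg : ∀ x, 0 ≤ w x)
    (hne : ∃ᶠ x in atTop, w x ≠ 0) {p : ℝ[X]} (hp : momentFunctional w hw (p ^ 2) = 0) :
    p = 0 := by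
  have hsum : HasSum (fun x : ℕ => w x * (p ^ 2).eval (x : ℝ)) 0 :=
    hp ▸ (summable_mul_eval hw (p ^ 2)).hasSum
  have hterm : (fun x : ℕ => w x * (p ^ 2).eval (x : ℝ)) = 0 := by
    refine (hasSum_zero_iff_of_nonneg fun x => ?_).1 hsum
    rw [eval_pow]
    exact mul_nonneg (hnonneg x) (sq_nonneg _)
  refine p.eq_zero_of_infinite_isRoot (((Nat.frequently_atTop_iff_infinite.1 hne).image
    Nat.cast_injective.injOn).mono (Set.image_subset_iff.2 fun x hx => ?_))
  simpa [show w x ≠ 0 from hx] using congr_fun hterm x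

lemma isMeixnerFunctional_momentFunctional {γ μ : ℝ}
    (hrec : ∀ x : ℕ, w (x + 1) * (x + 1) = μ * ((γ + x) * w x)) :
    IsMeixnerFunctional γ μ (momentFunctional w hw) := fun p => by
  rw [momentFunctional_apply, momentFunctional_apply, (summable_mul_eval hw _).tsum_eq_zero_add,
    ← tsum_mul_left]
  simp only [eval_mul, eval_X, eval_add, eval_C, taylor_eval, Nat.cast_zero, zero_mul, mul_zero,
    zero_add, Nat.cast_succ]
  refine tsum_congr fun x => ?_
  linear_combination p.eval ((x : ℝ) + 1) * hrec x

end Moment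

section Weight

variable {γ μ : ℝ}

/-- The Meixner (negative binomial) weight. -/
noncomputable def meixnerWeight (γ μ : ℝ) (x : ℕ) : ℝ :=
  μ ^ x * Real.Gamma (γ + x) / (x.factorial * Real.Gamma γ)

lemma meixnerWeight_pos (hγ : 0 < γ) (hμ : 0 < μ) (x : ℕ) : 0 < meixnerWeight γ μ x := by
  have := Real.Gamma_pos_of_pos hγ
  have := Real.Gamma_pos_of_pos (show 0 < γ + x by positivity)
  unfold meixnerWeight
  positivity

lemma meixnerWeight_succ {x : ℕ} (hγ : γ + x ≠ 0) :
    meixnerWeight γ μ (x + 1) * (x + 1) = μ * ((γ + x) * meixnerWeight γ μ x) := by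
  have hGamma : Real.Gamma (γ + (x + 1 : ℕ)) = (γ + x) * Real.Gamma (γ + x) := by
    rw [Nat.cast_succ, ← add_assoc, Real.Gamma_add_one hγ]
  have hx : (x : ℝ) + 1 ≠ 0 := by positivity
  rw [meixnerWeight, meixnerWeight, hGamma, Nat.factorial_succ, Nat.cast_mul, Nat.cast_succ]
  field_simp
  ring

lemma tendsto_meixnerWeight_ratio (hγ : 0 < γ) (hμ : 0 < μ) :
    Tendsto (fun x => meixnerWeight γ μ (x + 1) / meixnerWeight γ μ x) atTop (𝓝 μ) := by
  have hlim : Tendsto (fun x : ℕ => μ * ((γ + 1 * x) / (1 + 1 * x))) atTop (𝓝 (μ * (1 / 1))) :=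
    (tendsto_add_mul_div_add_mul_atTop_nhds γ 1 1 one_ne_zero).const_mul μ
  rw [div_one, mul_one] at hlim
  refine hlim.congr fun x => ?_
  have hw := (meixnerWeight_pos hγ hμ x).ne'
  have hx : (1 : ℝ) + x ≠ 0 := by positivity
  rw [eq_div_iff hw]
  field_simp
  linear_combination -meixnerWeight_succ (γ := γ) (μ := μ) (x := x) (by positivity)

lemma summable_meixnerWeight_mul_pow (hγ : 0 < γ) (hμ0 : 0 < μ) (hμ1 : μ < 1) (k : ℕ) :
    Summable fun x : ℕ => meixnerWeight γ μ x * (x : ℝ) ^ k :=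
  summable_mul_pow_of_tendsto_ratio (by rwa [abs_of_pos hμ0])
    (.of_forall fun x => (meixnerWeight_pos hγ hμ0 x).ne') (tendsto_meixnerWeight_ratio hγ hμ0) k

end Weight

/-- The relative Fisher information of the monic Meixner polynomial of degree `n ≥ 1`
with respect to the negative binomial weight `ω(x) = μ^x Γ(γ+x)/(x! Γ(γ))` equals
`n(1-μ)²/(μ(n+γ-1)) · ₂F₁(1-n, 1; 2-n-γ; μ)`. -/
theorem meixner_relative_fisher
    (γ μ : ℝ) (hγ : 0 < γ) (hμ0 : 0 < μ) (hμ1 : μ < 1)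
    (n : ℕ) (hn : 1 ≤ n)
    (M : Polynomial ℝ) (hmonic : M.Monic) (hdeg : M.natDegree = n)
    (horth : ∀ k : ℕ, k < n →
      ∑' x : ℕ, (μ ^ x * Real.Gamma (γ + x) / (x.factorial * Real.Gamma γ)) *
        M.eval (x : ℝ) * (x : ℝ) ^ k = 0) :
    (∑' x : ℕ, (μ ^ x * Real.Gamma (γ + x) / (x.factorial * Real.Gamma γ)) *
        (M.eval ((x : ℝ) + 1) - M.eval (x : ℝ)) ^ 2) /
      (∑' x : ℕ, (μ ^ x * Real.Gamma (γ + x) / (x.factorial * Real.Gamma γ)) *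
        (M.eval (x : ℝ)) ^ 2)
    = n * (1 - μ) ^ 2 / (μ * ((n : ℝ) + γ - 1)) *
        ∑ k ∈ Finset.range n, poch (1 - (n : ℝ)) k / poch (2 - (n : ℝ) - γ) k * μ ^ k := by
  obtain ⟨n, rfl⟩ : ∃ m, n = m + 1 := Nat.exists_eq_add_of_le' hn
  have hγk : ∀ k : ℕ, γ + k ≠ 0 := fun k => by positivity
  have hpos := meixnerWeight_pos hγ hμ0
  let L := momentFunctional (meixnerWeight γ μ) (summable_meixnerWeight_mul_pow hγ hμ0 hμ1)
  have hL : IsMeixnerFunctional γ μ L :=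
    isMeixnerFunctional_momentFunctional fun x => meixnerWeight_succ (hγk x)
  have hdef : ∀ p, L (p ^ 2) = 0 → p = 0 := fun _ =>
    eq_zero_of_momentFunctional_sq_eq_zero (fun x => (hpos x).le)
      (.of_forall fun x => (hpos x).ne')
  have hP := hL.isMonicOrthogonal_meixnerPoly hμ1.ne
  have hM : IsMonicOrthogonal L (n + 1) M := ⟨hmonic, hdeg, fun k hk => by
    simpa [L, momentFunctional_apply, meixnerWeight, mul_assoc] using horth k hk⟩
  have hfisher := hL.map_forwardDiff_sq_div_map_sq hμ1.ne hγk (mt (hdef _) (hP n).monic.ne_zero)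
  rw [← hM.eq hdef (hP (n + 1))] at hfisher
  convert hfisher using 1
  · simp [L, momentFunctional_apply, meixnerWeight, forwardDiff_apply, taylor_eval]
  · rw [hypergeometricPartialSum]
    push_cast
    ring_nf
end

section
/- Let γ > 0 and 0 < μ < 1 be real and n ≥ 1 an integer, and set d_j² = j! (γ)_j μ^j / (1−μ)^{γ+2j} for each j ≥ 0. Then the finite-sum identity n² Σ_{j=0}^{n-1} ((j+1)_{n-j-1})² (μ/(μ−1))^{2(n-1-j)} d_j² = d_n² · n(1−μ)²/(μ(n+γ−1)) · Σ_{k=0}^{n-1} ((1−n)_k/(2−n−γ)_k) μ^k holds. -/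
/-!
The squared norms satisfy `d_{j+1}² = θ (j+1) (γ+j) d_j²` with `θ = μ / (1-μ)²`, and this recurrence
is all that the identity needs. Iterated, it gives `d_{j+k}² = θ^k (j+1)_k (γ+j)_k d_j²`, while
reversing the order of the factors gives `(-j-k)_k / (1-j-k-γ)_k = (j+1)_k / (γ+j)_k`. Hence the
`j`-th term of the ladder sum for `n = j+k+1`, without the prefactor `n²`, is `d_{n-1}²` times the
`k`-th hypergeometric term. One more step of the recurrence rewrites `n² d_{n-1}²` as
`d_n² · n(1-μ)² / (μ(n+γ-1))`.
-/

theorem poch_succ (a : ℝ) (k : ℕ) : poch a (k + 1) = poch a k * (a + k) :=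
  Finset.prod_range_succ _ _

theorem poch_eq_ascPochhammer_eval (a : ℝ) (k : ℕ) : poch a k = (ascPochhammer ℝ k).eval a := by
  induction k with
  | zero => simp [poch]
  | succ k ih => rw [poch_succ, ih, ascPochhammer_succ_eval]

theorem ascPochhammer_eval_neg {R : Type*} [Ring R] (a : R) (k : ℕ) :
    (ascPochhammer R k).eval (-a) = (-1) ^ k * (ascPochhammer R k).eval (a - k + 1) := by
  rw [ascPochhammer_eval_neg_eq_descPochhammer, descPochhammer_eval_eq_ascPochhammer]

theorem ascPochhammer_eval_add_natCast_ne_zero {R : Type*} [Ring R] [IsDomain R] {γ : R}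
    {j k : ℕ} (hγ : ∀ i < j + k, γ + i ≠ 0) : (ascPochhammer R k).eval (γ + j) ≠ 0 := by
  rw [Ne, ascPochhammer_eval_eq_zero_iff]
  rintro ⟨i, hi, h⟩
  refine hγ (j + i) (by lia) ?_
  push_cast
  rw [h]
  abel

theorem eq_pow_mul_ascPochhammer_mul_of_recurrence {R : Type*} [CommSemiring R]
    {θ γ : R} {d : ℕ → R} (hd : ∀ j, d (j + 1) = θ * ((j + 1) * (γ + j)) * d j) (j k : ℕ) :
    d (j + k) = θ ^ k *
      ((ascPochhammer R k).eval (j + 1 : R) * (ascPochhammer R k).eval (γ + j)) * d j := by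
  induction k with
  | zero => simp
  | succ k ih =>
    rw [← add_assoc, hd, ih, ascPochhammer_succ_eval, ascPochhammer_succ_eval]
    push_cast
    ring

section Field

variable {K : Type*} [Field K]

theorem ascPochhammer_eval_neg_div_eval_neg (a b : K) (k : ℕ) :
    (ascPochhammer K k).eval (-a) / (ascPochhammer K k).eval (-b) =
      (ascPochhammer K k).eval (a - k + 1) / (ascPochhammer K k).eval (b - k + 1) := by
  rw [ascPochhammer_eval_neg, ascPochhammer_eval_neg,
    mul_div_mul_left _ _ (pow_ne_zero k (neg_ne_zero.mpr one_ne_zero))]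

theorem ladder_term_eq_hypergeometric_term {γ μ : K} {d2 : ℕ → K}
    (hd2 : ∀ j, d2 (j + 1) = μ / (1 - μ) ^ 2 * ((j + 1) * (γ + j)) * d2 j)
    {j k : ℕ} (hγ : ∀ i < j + k, γ + i ≠ 0) :
    (ascPochhammer K k).eval (j + 1 : K) ^ 2 * (μ / (μ - 1)) ^ (2 * k) * d2 j =
      d2 (j + k) * ((ascPochhammer K k).eval (-(j + k : K)) /
        (ascPochhammer K k).eval (-(j + k + γ - 1)) * μ ^ k) := by
  have hratio : (ascPochhammer K k).eval (-(j + k : K)) /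
        (ascPochhammer K k).eval (-(j + k + γ - 1)) =
      (ascPochhammer K k).eval (j + 1 : K) / (ascPochhammer K k).eval (γ + j) := by
    rw [ascPochhammer_eval_neg_div_eval_neg]
    congr 2 <;> ring
  have hscale : (μ / (μ - 1)) ^ (2 * k) = (μ / (1 - μ) ^ 2) ^ k * μ ^ k := by
    rw [pow_mul, ← mul_pow, div_pow, ← neg_sub 1 μ, neg_sq]
    ring
  have hne := ascPochhammer_eval_add_natCast_ne_zero hγ
  rw [hratio, hscale, eq_pow_mul_ascPochhammer_mul_of_recurrence hd2]
  field_simp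

theorem meixner_fisher_sum_identity_general {γ μ : K} (hμ0 : μ ≠ 0) (hμ1 : μ ≠ 1)
    {n : ℕ} (hγ : ∀ i < n, γ + i ≠ 0) {d2 : ℕ → K}
    (hd2 : ∀ j, d2 (j + 1) = μ / (1 - μ) ^ 2 * ((j + 1) * (γ + j)) * d2 j) :
    (n : K) ^ 2 * ∑ j ∈ Finset.range n,
        (ascPochhammer K (n - j - 1)).eval (j + 1 : K) ^ 2 *
          (μ / (μ - 1)) ^ (2 * (n - 1 - j)) * d2 j =
      d2 n * (n * (1 - μ) ^ 2 / (μ * (n + γ - 1))) *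
        ∑ k ∈ Finset.range n,
          (ascPochhammer K k).eval (1 - n : K) / (ascPochhammer K k).eval (2 - n - γ) * μ ^ k := by
  obtain _ | m := n
  · simp
  have hprefactor : d2 (m + 1) * (((m + 1 : ℕ) : K) * (1 - μ) ^ 2 /
      (μ * ((m + 1 : ℕ) + γ - 1))) = ((m + 1 : ℕ) : K) ^ 2 * d2 m := by
    have hγm : γ + m ≠ 0 := hγ m m.lt_succ_self
    have hν : 1 - μ ≠ 0 := sub_ne_zero.mpr hμ1.symm
    rw [hd2, show ((m + 1 : ℕ) : K) + γ - 1 = γ + m by push_cast; ring]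
    push_cast
    field_simp
  rw [hprefactor, mul_assoc, ← Finset.sum_range_reflect, Finset.mul_sum _ _ (d2 m)]
  congr 1
  refine Finset.sum_congr rfl fun k hk => ?_
  obtain ⟨j, rfl⟩ := Nat.exists_eq_add_of_le' (Nat.lt_succ_iff.mp (Finset.mem_range.mp hk))
  rw [show j + k + 1 - 1 - k = j by lia, show j + k + 1 - j - 1 = k by lia,
    show j + k + 1 - 1 - j = k by lia,
    ladder_term_eq_hypergeometric_term hd2 fun i hi => hγ i (by lia)]
  push_cast
  congr 4 <;> ring_nf

end Field

/-- The squared norm of the monic Meixner polynomial of degree `j` in `ℓ²` of the nonnegative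
integers with weight `μ^x Γ(γ+x) / (x! Γ(γ))`; these norms weight the terms of the ladder sum. -/
noncomputable def meixnerNormSq (γ μ : ℝ) (j : ℕ) : ℝ :=
  (j.factorial : ℝ) * poch γ j * μ ^ j / (1 - μ) ^ (γ + 2 * (j : ℝ))

theorem meixnerNormSq_succ (γ : ℝ) {μ : ℝ} (hμ : μ ≠ 1) (j : ℕ) :
    meixnerNormSq γ μ (j + 1) =
      μ / (1 - μ) ^ 2 * ((j + 1) * (γ + j)) * meixnerNormSq γ μ j := by
  have hpow : (1 - μ) ^ (γ + 2 * ((j + 1 : ℕ) : ℝ)) =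
      (1 - μ) ^ (γ + 2 * (j : ℝ)) * (1 - μ) ^ 2 := by
    rw [← Real.rpow_add_natCast (sub_ne_zero.mpr hμ.symm)]
    push_cast
    ring_nf
  rw [meixnerNormSq, meixnerNormSq, hpow, poch_succ, Nat.factorial_succ]
  push_cast
  field_simp
  ring

/-- Finite-sum identity converting the ladder-expansion form of the relative Fisher
information of the Meixner polynomials into its hypergeometric closed form, where
`d_j² = j! (γ)_j μ^j / (1-μ)^{γ+2j}` are the squared norms of the monic Meixner
polynomials. -/
theorem meixner_fisher_sum_identity
    (γ μ : ℝ) (hγ : 0 < γ) (hμ0 : 0 < μ) (hμ1 : μ < 1)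
    (n : ℕ) (hn : 1 ≤ n) (d2 : ℕ → ℝ)
    (hd2 : ∀ j : ℕ, d2 j = (j.factorial : ℝ) * poch γ j * μ ^ j /
      (1 - μ) ^ (γ + 2 * (j : ℝ))) :
    (n : ℝ) ^ 2 * ∑ j ∈ Finset.range n,
        (poch ((j : ℝ) + 1) (n - j - 1)) ^ 2 * (μ / (μ - 1)) ^ (2 * (n - 1 - j)) * d2 j
    = d2 n * ((n : ℝ) * (1 - μ) ^ 2 / (μ * ((n : ℝ) + γ - 1))) *
        ∑ k ∈ Finset.range n, poch (1 - (n : ℝ)) k / poch (2 - (n : ℝ) - γ) k * μ ^ k := by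
  obtain rfl : d2 = meixnerNormSq γ μ := funext hd2
  simp only [poch_eq_ascPochhammer_eval]
  exact meixner_fisher_sum_identity_general hμ0.ne' hμ1.ne (fun i _ => by positivity)
    (meixnerNormSq_succ γ hμ1.ne)
end
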